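/- (Sylvester's unimodality theorem) For all natural numbers ℓ, m and every k with 1 ≤ k and 2k ≤ ℓm, one has p_{k−1}(ℓ,m) ≤ p_k(ℓ,m); that is, the coefficients of the Gaussian binomial coefficient binom(ℓ+m,m)_q form a unimodal sequence. -/

import Mathlib

/-- `rectPartitions k l m` is the number of integer partitions of `k` fitting in an
`l × m` rectangle: at most `l` parts, each part at most `m`. -/
noncomputable def rectPartitions (k l m : ℕ) : ℕ :=
  Nat.card {π : Nat.Partition k // Multiset.card π.parts ≤ l ∧ ∀ i ∈ π.parts, i ≤ m}

/-!
Partitions of `k` in an `ℓ × m` rectangle correspond to the monomials of degree `ℓ` and weight `k`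
in variables `x₀, …, x_m`, where `xᵢ` has weight `i`. The derivations `e : xᵢ ↦ (m - i) xᵢ₊₁` and
`f : xᵢ ↦ i xᵢ₋₁` generate an action of `sl₂` for which these monomials have `h`-eigenvalue
`2k - ℓm`. Since `f` lowers the weight, it is locally nilpotent, so a vector killed by `e` has an
eigenvalue in `ℕ`. Hence `e`, which maps weight `k` to weight `k + 1`, is injective as long as
`2k < ℓm`.
-/

open MvPolynomial

section PrimitiveVector

variable {R L M : Type*} [CommRing R] [IsDomain R] [CharZero R] [LieRing L] [LieAlgebra R L]
  [AddCommGroup M] [Module R M] [Module.IsTorsionFree R M] [LieRingModule L M] [LieModule R L M]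

lemma exists_nat_of_hasPrimitiveVectorWith_of_pow_toEnd_eq_zero {h e f : L}
    {t : IsSl2Triple h e f} {v : M} {μ : R} (hv : t.HasPrimitiveVectorWith v μ)
    (hf : ∃ n, (LieModule.toEnd R L M f ^ n) v = 0) : ∃ n : ℕ, μ = n := by
  obtain ⟨n, hn, hn_succ⟩ := Nat.exists_not_and_succ_of_not_zero_of_exists hv.ne_zero hf
  have hlie : (((n : R) + 1) * (μ - n)) • (LieModule.toEnd R L M f ^ n) v = 0 := by
    rw [← hv.lie_e_pow_succ_toEnd_f n, hn_succ, lie_zero]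
  have hμ : μ - n = 0 :=
    (mul_eq_zero.1 ((smul_eq_zero.1 hlie).resolve_right hn)).resolve_left n.cast_add_one_ne_zero
  exact ⟨n, sub_eq_zero.1 hμ⟩

end PrimitiveVector

section RestrictSupport

variable {σ R : Type*} [CommSemiring R]

lemma map_mem_of_mem_restrictSupport {M : Type*} [AddCommMonoid M] [Module R M]
    {D : MvPolynomial σ R →ₗ[R] M} {S : Set (σ →₀ ℕ)} {W : Submodule R M}
    (hD : ∀ s ∈ S, D (monomial s 1) ∈ W) {p : MvPolynomial σ R}
    (hp : p ∈ restrictSupport R S) : D p ∈ W := by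
  suffices restrictSupport R S ≤ W.comap D from this hp
  rw [restrictSupport_eq_span, Submodule.span_le]
  rintro _ ⟨s, hs, rfl⟩
  exact hD s hs

lemma card_le_card_of_mapsTo_restrictSupport_of_injOn [StrongRankCondition R]
    {S T : Set (σ →₀ ℕ)} [Finite T]
    {D : MvPolynomial σ R →ₗ[R] MvPolynomial σ R}
    (hmap : Set.MapsTo D (restrictSupport R S) (restrictSupport R T))
    (hinj : Set.InjOn D (restrictSupport R S)) : Nat.card S ≤ Nat.card T := by
  have : Module.Finite R (restrictSupport R T) := .of_basis (basisRestrictSupport R T)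
  rw [← Module.finrank_eq_nat_card_basis (basisRestrictSupport R S),
    ← Module.finrank_eq_nat_card_basis (basisRestrictSupport R T)]
  exact LinearMap.finrank_le_finrank_of_injective (f := D.restrict hmap)
    fun p q hpq ↦ Subtype.ext (hinj p.2 q.2 (congrArg Subtype.val hpq))

end RestrictSupport

section ShiftDerivation

variable {σ R : Type*} [CommSemiring R]

/-- The derivation `∑ i, c i * X (g i) * ∂/∂X i`, which replaces one variable at a time according
to `g`, with coefficients `c`. -/
noncomputable def shiftDerivation (c : σ → R) (g : σ → σ) :
    Derivation R (MvPolynomial σ R) (MvPolynomial σ R) :=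
  mkDerivation R fun i ↦ c i • X (g i)

lemma shiftDerivation_X (c : σ → R) (g : σ → σ) (i : σ) :
    shiftDerivation c g (X i) = c i • X (g i) :=
  mkDerivation_X R _ i

lemma shiftDerivation_monomial (c : σ → R) (g : σ → σ) (s : σ →₀ ℕ) (r : R) :
    shiftDerivation c g (monomial s r) =
      s.sum fun i n ↦ monomial (s - .single i 1 + .single (g i) 1) (n * c i * r) := by
  rw [shiftDerivation, mkDerivation_monomial, Finsupp.smul_sum]
  refine Finsupp.sum_congr fun i _ ↦ ?_
  simp only [X, smul_monomial, smul_eq_mul, monomial_mul]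
  congr 1
  ring

lemma shiftDerivation_id_monomial (c : σ → R) (s : σ →₀ ℕ) (r : R) :
    shiftDerivation c id (monomial s r) = Finsupp.weight c s • monomial s r := by
  rw [shiftDerivation_monomial, Finsupp.weight_apply, Finsupp.sum, Finsupp.sum, Finset.sum_smul]
  refine Finset.sum_congr rfl fun i hi ↦ ?_
  rw [id, Finsupp.sub_add_single_one_cancel (Finsupp.mem_support_iff.1 hi),
    smul_monomial, smul_eq_mul, nsmul_eq_mul]

lemma shiftDerivation_mem_restrictSupport {c : σ → R} {g : σ → σ} {S T : Set (σ →₀ ℕ)}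
    (h : ∀ t i, c i ≠ 0 → t + .single i 1 ∈ S → t + .single (g i) 1 ∈ T) {p : MvPolynomial σ R}
    (hp : p ∈ restrictSupport R S) : shiftDerivation c g p ∈ restrictSupport R T := by
  refine map_mem_of_mem_restrictSupport (D := (shiftDerivation c g).toLinearMap) (fun s hs ↦ ?_) hp
  rw [Derivation.coeFn_coe, shiftDerivation_monomial]
  refine Submodule.sum_mem _ fun i hi ↦ (monomial_mem_restrictSupport R).2 ?_
  by_cases hc : c i = 0
  · exact .inr (by simp [hc])
  · refine .inl (h _ i hc ?_)
    rwa [Finsupp.sub_add_single_one_cancel (Finsupp.mem_support_iff.1 hi)]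

lemma exists_iterate_shiftDerivation_eq_zero {c : σ → R} {g : σ → σ} (w : σ → ℕ)
    (hw : ∀ i, c i ≠ 0 → w (g i) < w i) (p : MvPolynomial σ R) :
    ∃ n, (shiftDerivation c g)^[n] p = 0 := by
  set d := p.support.sup (Finsupp.weight w)
  have hmem (n : ℕ) : (shiftDerivation c g)^[n] p ∈
      restrictSupport R {s | Finsupp.weight w s + n ≤ d} := by
    induction n with
    | zero =>
      exact (mem_restrictSupport_iff R).2 fun _ hs ↦ Finset.le_sup (f := Finsupp.weight w) hs
    | succ n ih =>
      rw [Function.iterate_succ_apply']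
      refine shiftDerivation_mem_restrictSupport (fun t i hc ht ↦ ?_) ih
      have hlt := hw i hc
      simp only [Set.mem_ofPred_eq, map_add, Finsupp.weight_single, one_smul] at ht ⊢
      omega
  refine ⟨d + 1, support_eq_empty.1 <| Finset.eq_empty_of_forall_notMem fun s hs ↦ ?_⟩
  have hle : Finsupp.weight w s + (d + 1) ≤ d := hmem (d + 1) hs
  omega

lemma commutator_shiftDerivation_X {R : Type*} [CommRing R] (c c' : σ → R) (g g' : σ → σ) (i : σ) :
    ⁅shiftDerivation c g, shiftDerivation c' g'⁆ (X i) =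
      (c' i * c (g' i)) • X (g (g' i)) - (c i * c' (g i)) • X (g' (g i)) := by
  simp only [Derivation.commutator_apply, shiftDerivation_X, Derivation.map_smul, smul_smul]

end ShiftDerivation

section Sl2Action

variable {R : Type*} [CommRing R]

/-- The raising operator `e` of the `sl₂`-action on `R[x₀, x₁, …]` with parameter `a`. When `a = m`
is a natural number, the coefficient of `x_{m+1}` in `e x_m` vanishes, so that `R[x₀, …, x_m]` is
stable; no bound on the variables has to be built in. -/
noncomputable def sl2Raise (a : R) : Derivation R (MvPolynomial ℕ R) (MvPolynomial ℕ R) :=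
  shiftDerivation (fun i ↦ a - i) (· + 1)

variable (R) in
/-- The lowering operator `f` of the `sl₂`-action on `R[x₀, x₁, …]`. The truncated subtraction is
harmless since `x₀` is sent to zero. -/
noncomputable def sl2Lower : Derivation R (MvPolynomial ℕ R) (MvPolynomial ℕ R) :=
  shiftDerivation (fun i ↦ (i : R)) (· - 1)

/-- The semisimple element `h` of the `sl₂`-action on `R[x₀, x₁, …]` with parameter `a`. -/
noncomputable def sl2Cartan (a : R) : Derivation R (MvPolynomial ℕ R) (MvPolynomial ℕ R) :=
  shiftDerivation (fun i ↦ 2 * i - a) id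

lemma sl2Cartan_ne_zero [CharZero R] (a : R) : sl2Cartan a ≠ 0 := by
  intro h
  have h_eigenvalue (i : ℕ) : 2 * (i : R) - a = 0 := by
    have hX : (2 * (i : R) - a) • (X i : MvPolynomial ℕ R) = 0 :=
      (shiftDerivation_X _ id i).symm.trans (DFunLike.congr_fun h (X i))
    simpa using congrArg (coeff (.single i 1)) hX
  have h_two : (2 : R) = 0 := by
    linear_combination h_eigenvalue 1 - h_eigenvalue 0
  exact two_ne_zero h_two

lemma isSl2Triple_derivation [CharZero R] (a : R) :
    IsSl2Triple (sl2Cartan a) (sl2Raise a) (sl2Lower R) where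
  h_ne_zero := sl2Cartan_ne_zero a
  lie_e_f := derivation_ext fun i ↦ by
    rw [sl2Raise, sl2Lower, sl2Cartan, commutator_shiftDerivation_X, shiftDerivation_X]
    cases i with
    | zero => simp
    | succ i =>
      simp only [Nat.add_sub_cancel, ← sub_smul, id]
      congr 1
      push_cast
      ring
  lie_h_e_nsmul := derivation_ext fun i ↦ by
    rw [sl2Raise, sl2Cartan, commutator_shiftDerivation_X, Derivation.smul_apply, shiftDerivation_X,
      ← Nat.cast_smul_eq_nsmul R, smul_smul, id, id, ← sub_smul]
    congr 1
    push_cast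
    ring
  lie_h_f_nsmul := derivation_ext fun i ↦ by
    rw [sl2Lower, sl2Cartan, commutator_shiftDerivation_X, Derivation.neg_apply,
      Derivation.smul_apply, shiftDerivation_X, ← Nat.cast_smul_eq_nsmul R, smul_smul, id, id,
      ← sub_smul, ← neg_smul]
    cases i with
    | zero => simp
    | succ i =>
      congr 1
      push_cast [Nat.add_sub_cancel]
      ring

lemma exists_iterate_sl2Lower_eq_zero (p : MvPolynomial ℕ R) : ∃ n, (sl2Lower R)^[n] p = 0 := by
  refine exists_iterate_shiftDerivation_eq_zero id (fun i hi ↦ ?_) p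
  have hi_pos : i ≠ 0 := by
    rintro rfl
    exact hi Nat.cast_zero
  exact Nat.sub_one_lt hi_pos

lemma weight_two_mul_sub (a : R) (s : ℕ →₀ ℕ) :
    Finsupp.weight (fun i : ℕ ↦ 2 * (i : R) - a) s =
      2 * (Finsupp.weight id s : ℕ) - s.degree * a := by
  simp only [Finsupp.weight_apply, Finsupp.degree_apply, Finsupp.sum, Nat.cast_sum]
  rw [Finset.mul_sum, Finset.sum_mul, ← Finset.sum_sub_distrib]
  refine Finset.sum_congr rfl fun i _ ↦ ?_
  simp only [nsmul_eq_mul, smul_eq_mul, Nat.cast_mul, id]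
  ring

end Sl2Action

section BoxExponents

/-- The exponents of the monomials of degree `l` and weight `k` in `x₀, …, x_m`, where `xᵢ` has
weight `i`. They encode the partitions of `k` in an `l × m` rectangle, the exponent of `xᵢ` being
the number of parts equal to `i` after padding with zeros to exactly `l` parts. -/
def boxExponents (l m k : ℕ) : Set (ℕ →₀ ℕ) :=
  {s | s.degree = l ∧ Finsupp.weight id s = k ∧ ∀ i ∈ s.support, i ≤ m}

variable {R : Type*} [CommRing R] {l m k : ℕ}

lemma sl2Raise_mem_restrictSupport_boxExponents {p : MvPolynomial ℕ R}
    (hp : p ∈ restrictSupport R (boxExponents l m k)) :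
    sl2Raise (m : R) p ∈ restrictSupport R (boxExponents l m (k + 1)) := by
  refine shiftDerivation_mem_restrictSupport (fun t i hi ht ↦ ?_) hp
  simp only [boxExponents, Set.mem_ofPred_eq, map_add, Finsupp.degree_single, Finsupp.weight_single,
    smul_eq_mul, one_mul, id] at ht ⊢
  obtain ⟨hdeg, hweight, hle⟩ := ht
  have him : i < m := by
    refine (hle i (by simp)).lt_of_ne ?_
    rintro rfl
    exact hi (sub_self _)
  refine ⟨hdeg, by omega, fun j hj ↦ ?_⟩
  simp only [Finsupp.mem_support_iff, Finsupp.add_apply, Finsupp.single_apply] at hle hj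
  grind

lemma sl2Cartan_eq_smul {p : MvPolynomial ℕ R}
    (hp : p ∈ restrictSupport R (boxExponents l m k)) :
    sl2Cartan (m : R) p = (2 * k - l * m : R) • p := by
  rw [← sub_eq_zero, ← Submodule.mem_bot R]
  refine map_mem_of_mem_restrictSupport
    (D := (sl2Cartan (m : R)).toLinearMap - (2 * k - l * m : R) • LinearMap.id) ?_ hp
  rintro s ⟨rfl, rfl, -⟩
  simp [sl2Cartan, shiftDerivation_id_monomial, weight_two_mul_sub]

lemma eq_zero_of_sl2Raise_eq_zero [IsDomain R] [CharZero R] (h : 2 * k < l * m)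
    {p : MvPolynomial ℕ R} (hp : p ∈ restrictSupport R (boxExponents l m k))
    (hraise : sl2Raise (m : R) p = 0) : p = 0 := by
  by_contra hne
  have hprim : (isSl2Triple_derivation (m : R)).HasPrimitiveVectorWith p (2 * k - l * m : R) :=
    ⟨hne, sl2Cartan_eq_smul hp, hraise⟩
  obtain ⟨n, hn⟩ : ∃ n : ℕ, (2 * k - l * m : R) = n := by
    obtain ⟨N, hN⟩ := exists_iterate_sl2Lower_eq_zero p
    exact exists_nat_of_hasPrimitiveVectorWith_of_pow_toEnd_eq_zero hprim
      ⟨N, (Module.End.pow_apply _ N p).trans hN⟩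
  have hcast : 2 * k = n + l * m := by
    exact_mod_cast sub_eq_iff_eq_add.1 hn
  omega

lemma sl2Raise_injOn [IsDomain R] [CharZero R] (h : 2 * k < l * m) :
    Set.InjOn (sl2Raise (m : R)) (restrictSupport R (boxExponents l m k)) :=
  (Set.injOn_iff_map_eq_zero _ _).2 fun _ ↦ eq_zero_of_sl2Raise_eq_zero h

end BoxExponents

section RectPartitions

lemma filter_ne_add_replicate {α : Type*} [DecidableEq α] (M : Multiset α) (a : α) :
    M.filter (· ≠ a) + .replicate (M.card - (M.filter (· ≠ a)).card) a = M := by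
  have hsplit : M.filter (· ≠ a) + .replicate (M.count a) a = M := by
    rw [← Multiset.filter_eq', add_comm]
    exact Multiset.filter_add_not _ M
  have hcard := congrArg Multiset.card hsplit
  rw [Multiset.card_add, Multiset.card_replicate] at hcard
  rwa [← hcard, Nat.add_sub_cancel_left]

lemma mem_boxExponents_iff_toMultiset {l m k : ℕ} {s : ℕ →₀ ℕ} :
    s ∈ boxExponents l m k ↔
      s.toMultiset.card = l ∧ s.toMultiset.sum = k ∧ ∀ i ∈ s.toMultiset, i ≤ m := by
  simp [boxExponents, Finsupp.degree_apply, Finsupp.weight_apply, Finsupp.sum,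
    Finsupp.card_toMultiset]

/-- Multisets of `l` natural numbers at most `m` with sum `k` are partitions of `k` in an `l × m`
rectangle, padded with zeros to exactly `l` parts. -/
def paddedPartsEquiv (l m k : ℕ) : {M : Multiset ℕ // M.card = l ∧ M.sum = k ∧ ∀ i ∈ M, i ≤ m} ≃
    {π : Nat.Partition k // π.parts.card ≤ l ∧ ∀ i ∈ π.parts, i ≤ m} where
  toFun M := ⟨.ofSums k M M.2.2.1,
    (Multiset.card_le_card (Multiset.filter_le _ _)).trans_eq M.2.1,
    fun i hi ↦ M.2.2.2 i (Multiset.mem_of_mem_filter hi)⟩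
  invFun π := ⟨π.1.parts + .replicate (l - π.1.parts.card) 0, by
    obtain ⟨π, hcard, hle⟩ := π
    refine ⟨by simp [hcard], by simp [π.parts_sum], fun i hi ↦ ?_⟩
    rcases Multiset.mem_add.1 hi with hi | hi
    · exact hle i hi
    · exact (Multiset.eq_of_mem_replicate hi).trans_le m.zero_le⟩
  left_inv := by
    rintro ⟨M, rfl, -, -⟩
    exact Subtype.ext (filter_ne_add_replicate M 0)
  right_inv := by
    rintro ⟨π, -, -⟩
    refine Subtype.ext (Nat.Partition.ext ?_)
    have hparts : π.parts.filter (· ≠ 0) = π.parts :=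
      Multiset.filter_eq_self.2 fun _ hi ↦ (π.parts_pos hi).ne'
    have hzeros (n : ℕ) : (Multiset.replicate n 0).filter (· ≠ 0) = 0 :=
      Multiset.filter_eq_nil.2 fun _ hi ↦ not_not.2 (Multiset.eq_of_mem_replicate hi)
    exact (Multiset.filter_add _ _ _).trans (by rw [hparts, hzeros, add_zero])

/-- Reading an exponent vector as a multiset of zero-padded parts identifies the monomials counted
by `boxExponents` with the partitions counted by `rectPartitions`. -/
noncomputable def boxExponentsEquiv (l m k : ℕ) : boxExponents l m k ≃
    {π : Nat.Partition k // π.parts.card ≤ l ∧ ∀ i ∈ π.parts, i ≤ m} :=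
  (Multiset.toFinsupp.symm.toEquiv.subtypeEquiv fun _ ↦ mem_boxExponents_iff_toMultiset).trans
    (paddedPartsEquiv l m k)

instance (l m k : ℕ) : Finite (boxExponents l m k) := .of_equiv _ (boxExponentsEquiv l m k).symm

lemma card_boxExponents (l m k : ℕ) : Nat.card (boxExponents l m k) = rectPartitions k l m :=
  Nat.card_congr (boxExponentsEquiv l m k)

end RectPartitions

/-- Sylvester's unimodality theorem: for all `ℓ, m` and `1 ≤ k` with `2k ≤ ℓm`,
one has `p_{k−1}(ℓ,m) ≤ p_k(ℓ,m)`. -/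
theorem sylvester_unimodality (ℓ m k : ℕ) (hk : 1 ≤ k) (hk2 : 2 * k ≤ ℓ * m) :
    rectPartitions (k - 1) ℓ m ≤ rectPartitions k ℓ m := by
  obtain ⟨j, rfl⟩ := Nat.exists_eq_add_of_le' hk
  rw [Nat.add_sub_cancel, ← card_boxExponents, ← card_boxExponents]
  exact card_le_card_of_mapsTo_restrictSupport_of_injOn (D := (sl2Raise (m : ℚ)).toLinearMap)
    (fun _ ↦ sl2Raise_mem_restrictSupport_boxExponents)
    (sl2Raise_injOn (by omega))
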